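/- For all k and all m with 0 ≤ m ≤ 2^k − 2, the inequality τ(k,m) ≤ b(k−2, m−1) / 2^{m−1} holds, where b(p,q) := Σ_{i=0}^{p} C(q,i). -/

import Mathlib

open Finset Filter MeasureTheory

open scoped Classical

noncomputable section

/-- The vertex set `{0,1}^d` of the 0/1-cube, as a finite subset of `ℝ^d`. -/
def cube01 (d : ℕ) : Finset (Fin d → ℝ) :=
  (Finset.univ : Finset (Fin d → Bool)).image (fun f i => if f i then 1 else 0)

/-- The vertex set `{-1,+1}^d` of the `±1`-cube, as a finite subset of `ℝ^d`. -/
def pmCube (d : ℕ) : Finset (Fin d → ℝ) :=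
  (Finset.univ : Finset (Fin d → Bool)).image (fun f i => if f i then 1 else -1)

/-- The all-one vector `𝟙 ∈ ℝ^d`. -/
def allOne (d : ℕ) : Fin d → ℝ := fun _ => 1

/-- `C^d_* = {-1,+1}^d \ {-𝟙, 𝟙}`. -/
def pmCubeStar (d : ℕ) : Finset (Fin d → ℝ) :=
  (pmCube d) \ {-(allOne d), allOne d}

/-- `{v,w}` spans an edge (a one-dimensional face) of the polytope `P`:
`v ≠ w` and the segment `[v,w]` is an (exposed) face of `P`. -/
def IsEdge {d : ℕ} (P : Set (Fin d → ℝ)) (v w : Fin d → ℝ) : Prop :=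
  v ≠ w ∧ IsExposed ℝ P (segment ℝ v w)

/-- The number of edges of the graph of the polytope `conv X`. -/
noncomputable def edgeCount {d : ℕ} (X : Finset (Fin d → ℝ)) : ℕ :=
  ((X.powersetCard 2).filter (fun e =>
      ∃ v w, e = {v, w} ∧ IsEdge (convexHull ℝ (X : Set (Fin d → ℝ))) v w)).card

/-- The density of the graph of the polytope `conv X` (whose vertex set is `X`
when `X` consists of 0/1- or `±1`-points): number of edges divided by `C(|X|,2)`. -/
noncomputable def graphDensity {d : ℕ} (X : Finset (Fin d → ℝ)) : ℝ :=
  (edgeCount X : ℝ) / (X.card.choose 2 : ℝ)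

/-- The expected graph-density of the convex hull of a uniformly random
`n`-element subset of `{0,1}^d`. -/
noncomputable def expDensity (d n : ℕ) : ℝ :=
  (∑ X ∈ (cube01 d).powersetCard n, graphDensity X) /
    (((cube01 d).powersetCard n).card : ℝ)

/-- The Hamming distance of `v, w ∈ ℝ^d`. -/
def hdist {d : ℕ} (v w : Fin d → ℝ) : ℕ :=
  (Finset.univ.filter (fun i => v i ≠ w i)).card

/-- `C(v,w)`: the points of the `±1`-cube agreeing with `v` and `w` wherever these agree
(the vertex set of the smallest face of the cube containing `v` and `w`). -/
def cubeFace {d : ℕ} (v w : Fin d → ℝ) : Finset (Fin d → ℝ) :=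
  (pmCube d).filter (fun x => ∀ i, v i = w i → x i = v i)

/-- `C_*(v,w) = C(v,w) \ {v,w}`. -/
def cubeFaceStar {d : ℕ} (v w : Fin d → ℝ) : Finset (Fin d → ℝ) :=
  (cubeFace v w) \ {v, w}

/-- The long-edge probability `τ(k,m)`: the probability that for a uniformly random
`m`-element subset `Y ⊆ C^k_*`, `conv Y ∩ conv{-𝟙,𝟙} = ∅`. -/
noncomputable def tau (k m : ℕ) : ℝ :=
  ((((pmCubeStar k).powersetCard m).filter (fun Y =>
      convexHull ℝ (Y : Set (Fin k → ℝ)) ∩ segment ℝ (-(allOne k)) (allOne k) = ∅)).card : ℝ) /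
    ((((pmCubeStar k).powersetCard m)).card : ℝ)

/-- `Y ∩ (-Y) = ∅`. -/
def NoAntipodal {k : ℕ} (Y : Finset (Fin k → ℝ)) : Prop := ∀ y ∈ Y, -y ∉ Y

/-- `α(k,m)`: the conditional probability that `conv Y ∩ conv{-𝟙,𝟙} = ∅`
given `Y ∩ (-Y) = ∅`, for a uniformly random `m`-element subset `Y ⊆ C^k_*`. -/
noncomputable def alpha (k m : ℕ) : ℝ :=
  ((((pmCubeStar k).powersetCard m).filter (fun (Y : Finset (Fin k → ℝ)) =>
      convexHull ℝ (Y : Set (Fin k → ℝ)) ∩ segment ℝ (-(allOne k)) (allOne k) = ∅ ∧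
        NoAntipodal Y)).card : ℝ) /
    ((((pmCubeStar k).powersetCard m).filter (fun Y => NoAntipodal Y)).card : ℝ)

/-- The sample space for a uniformly random `n`-element subset `X ⊆ {-1,+1}^d`
together with a uniformly random `2`-element subset `{v,w} ⊆ X`. -/
def edgeSpace (d n : ℕ) : Finset (Finset (Fin d → ℝ) × Finset (Fin d → ℝ)) :=
  (((pmCube d).powersetCard n) ×ˢ ((pmCube d).powersetCard 2)).filter (fun p => p.2 ⊆ p.1)

/-- The event that the chosen pair `{v,w}` is an edge of `conv X`. -/
def EdgeEvent {d : ℕ} (p : Finset (Fin d → ℝ) × Finset (Fin d → ℝ)) : Prop :=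
  ∃ v w, p.2 = {v, w} ∧ IsEdge (convexHull ℝ (p.1 : Set (Fin d → ℝ))) v w

/-- The event that the chosen pair `{v,w}` satisfies `dist(v,w) = k`. -/
def DistEvent {d : ℕ} (k : ℕ) (p : Finset (Fin d → ℝ) × Finset (Fin d → ℝ)) : Prop :=
  ∃ v w, v ≠ w ∧ p.2 = {v, w} ∧ hdist v w = k

/-- The event that the chosen pair `{v,w}` satisfies `dist(v,w) = k` and
`#(X ∩ C_*(v,w)) = m`. -/
def DistCapEvent {d : ℕ} (k m : ℕ) (p : Finset (Fin d → ℝ) × Finset (Fin d → ℝ)) : Prop :=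
  ∃ v w, v ≠ w ∧ p.2 = {v, w} ∧ hdist v w = k ∧ (p.1 ∩ cubeFaceStar v w).card = m

/-- The edge probability `π(d,n)`. -/
noncomputable def piEdge (d n : ℕ) : ℝ :=
  (((edgeSpace d n).filter (fun p => EdgeEvent p)).card : ℝ) / ((edgeSpace d n).card : ℝ)

/-- The conditional edge probability `π_k(d,n)` given `dist(v,w) = k`. -/
noncomputable def piEdgeK (d n k : ℕ) : ℝ :=
  (((edgeSpace d n).filter (fun p => EdgeEvent p ∧ DistEvent k p)).card : ℝ) /
    (((edgeSpace d n).filter (fun p => DistEvent k p)).card : ℝ)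

/-- `φ : ℝ^{r+1} → ℝ^r`: the orthogonal projection onto the hyperplane
`H_𝟙 = {x : 𝟙ᵀx = 0}` (namely `x ↦ x - ((𝟙ᵀx)/(r+1))·𝟙`), followed by the
projection to the first `r` coordinates. -/
noncomputable def phi (r : ℕ) (x : Fin (r + 1) → ℝ) : Fin r → ℝ :=
  fun i => x i.castSucc - (∑ j, x j) / (r + 1 : ℝ)

/-- The vector configuration `V_r = φ(C^{r+1}_*)`. -/
noncomputable def Vr (r : ℕ) : Finset (Fin r → ℝ) := (pmCubeStar (r + 1)).image (phi r)

/-- The half configuration `V_r^+ = φ({v ∈ C^{r+1}_* : v_{r+1} = +1})`. -/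
noncomputable def VrPlus (r : ℕ) : Finset (Fin r → ℝ) :=
  (((pmCubeStar (r + 1)).filter (fun v => v (Fin.last r) = 1))).image (phi r)

/-- The number of sign vectors `ε ∈ {-1,+1}^S` with `0 ∉ conv{ε_s · s : s ∈ S}`. -/
noncomputable def signCount {r : ℕ} (S : Finset (Fin r → ℝ)) : ℕ :=
  ((Finset.univ : Finset (↥S → Bool)).filter (fun ε =>
      (0 : Fin r → ℝ) ∉ convexHull ℝ
        (Set.range fun s : ↥S => (if ε s then (1 : ℝ) else -1) • (s : Fin r → ℝ)))).card

/-- `α(S)`: the probability that `0 ∉ conv{ε_s · s : s ∈ S}` for a uniformly random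
sign vector `ε ∈ {-1,+1}^S`. -/
noncomputable def alphaSet {r : ℕ} (S : Finset (Fin r → ℝ)) : ℝ :=
  (signCount S : ℝ) / ((Finset.univ : Finset (↥S → Bool)).card : ℝ)

/-- The complement `ℝ^r \ ⋃_{s ∈ S} H(s)` of the hyperplane arrangement `ℋ(S)`. -/
def arrComplement {r : ℕ} (S : Finset (Fin r → ℝ)) : Set (Fin r → ℝ) :=
  {x | ∀ s ∈ S, ∑ i, s i * x i ≠ 0}

/-- `χ(S)`: the number of chambers (connected components of the complement)
of the hyperplane arrangement `ℋ(S)`. -/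
noncomputable def chi {r : ℕ} (S : Finset (Fin r → ℝ)) : ℕ :=
  Nat.card (ConnectedComponents ↥(arrComplement S))

/-- `b(p,q) = ∑_{i=0}^p C(q,i)`. -/
def bFn (p q : ℕ) : ℕ := ∑ i ∈ Finset.range (p + 1), q.choose i

/-!
If `conv Y` misses `conv{-𝟙,𝟙}`, it misses the whole line `ℝ𝟙`, because `conv Y` lies in the box
`[-1,1]^k`. By Hahn–Banach some functional vanishing on `𝟙` is then positive on `Y`. Such
functionals form a space `W` of dimension `k - 1`.

Choose one vertex from each of the `N = 2^{k-1} - 1` antipodal pairs of `C^k_*`. A set `Y` on which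
some `f ∈ W` is positive amounts to an `m`-set `T` of representatives together with the signs of `f`
on `T`. Cover's theorem bounds the number of strict sign patterns of `m` functionals on an
`r`-dimensional space by `2 * ∑_{i<r} C(m-1,i)`: deleting a functional merges two patterns into one
precisely when the common pattern is already realized on the kernel of that functional, so the
counts satisfy Pascal's recursion. Hence there are at most `2 * b(k-2,m-1) * C(N,m)` sets `Y`, and
`2^m * C(N,m) ≤ C(2N,m)` turns this into the bound on the probability.
-/

open scoped Pointwise

theorem pow_mul_choose_le_choose_mul (c n m : ℕ) : c ^ m * n.choose m ≤ (c * n).choose m := by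
  have descFactorial_le : c ^ m * n.descFactorial m ≤ (c * n).descFactorial m := by
    induction m with
    | zero => simp
    | succ m ih =>
      have factor_le : c * (n - m) ≤ c * n - m := by
        rcases c.eq_zero_or_pos with rfl | hc
        · simp
        · rw [Nat.mul_sub]
          exact Nat.sub_le_sub_left (Nat.le_mul_of_pos_left m hc) _
      calc c ^ (m + 1) * n.descFactorial (m + 1)
          = c * (n - m) * (c ^ m * n.descFactorial m) := by rw [Nat.descFactorial_succ]; ring
        _ ≤ (c * n - m) * (c * n).descFactorial m := Nat.mul_le_mul factor_le ih
        _ = (c * n).descFactorial (m + 1) := (Nat.descFactorial_succ _ _).symm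
  rw [Nat.descFactorial_eq_factorial_mul_choose, Nat.descFactorial_eq_factorial_mul_choose,
    mul_left_comm] at descFactorial_le
  exact Nat.le_of_mul_le_mul_left descFactorial_le m.factorial_pos

theorem sum_range_succ_choose_succ (n r : ℕ) :
    ∑ i ∈ range (r + 1), (n + 1).choose i =
      ∑ i ∈ range (r + 1), n.choose i + ∑ i ∈ range r, n.choose i := by
  rw [sum_range_succ', sum_range_succ' n.choose]
  simp only [Nat.choose_succ_succ', sum_add_distrib, Nat.choose_zero_right]
  ring

section SignPatterns

variable {K ι V : Type*} [Field K] [LinearOrder K] [AddCommGroup V] [Module K V] [DecidableEq ι]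

/-- The strict sign patterns on `T` realized by the linear functionals `l t`. A pattern is encoded
by its set `P ⊆ T` of positive indices; the functionals with index in `T \ P` are negative. -/
def signPatterns (l : ι → Module.Dual K V) (T : Finset ι) : Finset (Finset ι) :=
  T.powerset.filter fun P => ∃ v, (∀ t ∈ P, 0 < l t v) ∧ ∀ t ∈ T \ P, l t v < 0

theorem mem_signPatterns {l : ι → Module.Dual K V} {T P : Finset ι} :
    P ∈ signPatterns l T ↔ P ⊆ T ∧ ∃ v, (∀ t ∈ P, 0 < l t v) ∧ ∀ t ∈ T \ P, l t v < 0 := by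
  rw [signPatterns, mem_filter, mem_powerset]

theorem signPatterns_empty (l : ι → Module.Dual K V) : signPatterns l ∅ = {∅} := by
  simp [signPatterns, filter_singleton]

theorem signPatterns_eq_empty {l : ι → Module.Dual K V} {T : Finset ι} {a : ι} (ha : a ∈ T)
    (hl : l a = 0) : signPatterns l T = ∅ := by
  refine filter_eq_empty_iff.2 ?_
  rintro P - ⟨v, hpos, hneg⟩
  by_cases haP : a ∈ P
  · simpa [hl] using hpos a haP
  · simpa [hl] using hneg a (Finset.mem_sdiff.2 ⟨ha, haP⟩)

theorem inter_mem_signPatterns {l : ι → Module.Dual K V} {S T P : Finset ι} (hST : S ⊆ T)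
    (hP : P ∈ signPatterns l T) : P ∩ S ∈ signPatterns l S := by
  obtain ⟨-, v, hpos, hneg⟩ := mem_signPatterns.1 hP
  refine mem_signPatterns.2 ⟨inter_subset_right, v, fun t ht => hpos t (mem_inter.1 ht).1,
    fun t ht => hneg t ?_⟩
  grind

variable [IsStrictOrderedRing K]

theorem mem_signPatterns_ker {l : ι → Module.Dual K V} {T P : Finset ι} {a : ι} (haT : a ∉ T)
    (haP : a ∉ P) (hpos : insert a P ∈ signPatterns l (insert a T))
    (hneg : P ∈ signPatterns l (insert a T)) :
    P ∈ signPatterns (fun t => (l t).domRestrict (LinearMap.ker (l a))) T := by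
  obtain ⟨hPT, v, hv, hv'⟩ := mem_signPatterns.1 hpos
  obtain ⟨-, w, hw, hw'⟩ := mem_signPatterns.1 hneg
  have hav : 0 < l a v := hv a (mem_insert_self a P)
  have haw : 0 < -l a w := neg_pos.2 (hw' a (by simp [haP]))
  -- The point where the segment from `v` to `w` meets the hyperplane `l a = 0`, up to scaling.
  let u : V := (-l a w) • v + l a v • w
  have hu (t : ι) : l t u = -l a w * l t v + l a v * l t w := by simp [u]
  have hu_mem : u ∈ LinearMap.ker (l a) := by
    rw [LinearMap.mem_ker, hu]
    ring
  refine mem_signPatterns.2 ⟨(insert_subset_insert_iff haP).1 hPT, ⟨u, hu_mem⟩,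
    fun t ht => ?_, fun t ht => ?_⟩
  · rw [LinearMap.domRestrict_apply, hu]
    exact add_pos (mul_pos haw (hv t (mem_insert_of_mem ht))) (mul_pos hav (hw t ht))
  · have hta : t ≠ a := by grind
    rw [LinearMap.domRestrict_apply, hu]
    exact add_neg (mul_neg_of_pos_of_neg haw (hv' t (by grind)))
      (mul_neg_of_pos_of_neg hav (hw' t (by grind)))

theorem card_signPatterns_insert_le (l : ι → Module.Dual K V) {T : Finset ι} {a : ι}
    (ha : a ∉ T) :
    (signPatterns l (insert a T)).card ≤ (signPatterns l T).card +
      (signPatterns (fun t => (l t).domRestrict (LinearMap.ker (l a))) T).card := by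
  rw [← card_memberSubfamily_add_card_nonMemberSubfamily a, ← card_union_add_card_inter]
  refine add_le_add (card_le_card fun P hP => ?_) (card_le_card fun P hP => ?_)
  · rw [mem_union, mem_memberSubfamily, mem_nonMemberSubfamily] at hP
    rcases hP with ⟨hP, haP⟩ | ⟨hP, haP⟩
    · have hPT : P ⊆ T := (insert_subset_insert_iff haP).1 (mem_signPatterns.1 hP).1
      simpa [insert_inter_of_notMem ha, inter_eq_left.2 hPT] using
        inter_mem_signPatterns (subset_insert a T) hP
    · have hPT : P ⊆ T := (subset_insert_iff_of_notMem haP).1 (mem_signPatterns.1 hP).1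
      simpa [inter_eq_left.2 hPT] using inter_mem_signPatterns (subset_insert a T) hP
  · rw [mem_inter, mem_memberSubfamily, mem_nonMemberSubfamily] at hP
    exact mem_signPatterns_ker ha hP.1.2 hP.1.1 hP.2.1

theorem card_signPatterns_le [FiniteDimensional K V] (l : ι → Module.Dual K V) {T : Finset ι}
    {m : ℕ} (hT : T.card = m + 1) :
    (signPatterns l T).card ≤ 2 * ∑ i ∈ range (Module.finrank K V), m.choose i := by
  induction m generalizing T V with
  | zero =>
    obtain ⟨a, rfl⟩ := card_eq_one.1 hT
    by_cases hla : l a = 0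
    · simp [signPatterns_eq_empty (mem_singleton_self a) hla]
    · have hrank := Module.Dual.finrank_ker_add_one_of_ne_zero hla
      have hcard := card_signPatterns_insert_le l (notMem_empty a)
      simpa [signPatterns_empty, ← hrank, sum_range_succ'] using hcard
  | succ m ih =>
    obtain ⟨a, T, haT, rfl, hcard⟩ := card_eq_succ.1 hT
    by_cases hla : l a = 0
    · simp [signPatterns_eq_empty (mem_insert_self a T) hla]
    · rw [← Module.Dual.finrank_ker_add_one_of_ne_zero hla, sum_range_succ_choose_succ, mul_add,
        Module.Dual.finrank_ker_add_one_of_ne_zero hla]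
      exact (card_signPatterns_insert_le l haT).trans (add_le_add (ih l hcard) (ih _ hcard))

end SignPatterns

section SymmetricSets

variable {E : Type*} [AddCommGroup E] [DecidableEq E]

theorem exists_eq_union_neg {H Y : Finset E} (hY : Y ⊆ H ∪ -H) :
    ∃ P ⊆ H, ∃ N ⊆ H, Y = P ∪ -N := by
  refine ⟨H ∩ Y, inter_subset_left, H ∩ -Y, inter_subset_left, ?_⟩
  ext y
  have := @hY y
  simp only [mem_union, mem_inter, mem_neg', neg_neg] at this ⊢
  tauto

variable {K V : Type*} [Field K] [LinearOrder K] [IsStrictOrderedRing K]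
  [AddCommGroup V] [Module K V] [Module K E]

theorem exists_signPattern_of_forall_pos {B : E →ₗ[K] V →ₗ[K] K} {H Y : Finset E}
    (hH : Disjoint H (-H)) (hY : Y ⊆ H ∪ -H) {v : V} (hv : ∀ y ∈ Y, 0 < B y v) :
    ∃ T ∈ H.powersetCard Y.card, ∃ P ∈ signPatterns B T, P ∪ -(T \ P) = Y := by
  obtain ⟨P, hPH, N, hNH, rfl⟩ := exists_eq_union_neg hY
  have pos_on_P : ∀ t ∈ P, 0 < B t v := fun t ht => hv t (mem_union_left _ ht)
  have neg_on_N : ∀ t ∈ N, B t v < 0 := fun t ht => by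
    simpa using hv (-t) (mem_union_right _ (neg_mem_neg ht))
  have disjoint_P_N : Disjoint P N :=
    disjoint_left.2 fun t htP htN => (pos_on_P t htP).not_gt (neg_on_N t htN)
  have disjoint_P_neg_N : Disjoint P (-N) := hH.mono hPH (neg_subset_neg hNH)
  have sdiff_eq : (P ∪ N) \ P = N := union_sdiff_cancel_left disjoint_P_N
  refine ⟨P ∪ N, mem_powersetCard.2 ⟨union_subset hPH hNH, ?_⟩, P,
    mem_signPatterns.2 ⟨subset_union_left, v, pos_on_P, ?_⟩, ?_⟩
  · rw [card_union_of_disjoint disjoint_P_N, card_union_of_disjoint disjoint_P_neg_N, card_neg]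
  · rwa [sdiff_eq]
  · rw [sdiff_eq]

theorem card_filter_exists_forall_pos_le [FiniteDimensional K V] (B : E →ₗ[K] V →ₗ[K] K)
    {H : Finset E} (hH : Disjoint H (-H)) (m : ℕ) :
    (((H ∪ -H).powersetCard (m + 1)).filter fun Y => ∃ v, ∀ y ∈ Y, 0 < B y v).card ≤
      H.card.choose (m + 1) * (2 * ∑ i ∈ range (Module.finrank K V), m.choose i) := by
  have subset_biUnion :
      (((H ∪ -H).powersetCard (m + 1)).filter fun Y => ∃ v, ∀ y ∈ Y, 0 < B y v) ⊆
        (H.powersetCard (m + 1)).biUnion fun T =>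
          (signPatterns B T).image fun P => P ∪ -(T \ P) := by
    intro Y hY
    obtain ⟨hY, v, hv⟩ := mem_filter.1 hY
    obtain ⟨hYH, hYcard⟩ := mem_powersetCard.1 hY
    simpa only [mem_biUnion, mem_image, hYcard] using exists_signPattern_of_forall_pos hH hYH hv
  rw [← card_powersetCard]
  refine (card_le_card subset_biUnion).trans (card_biUnion_le_card_mul _ _ _ fun T hT => ?_)
  exact card_image_le.trans (card_signPatterns_le B (mem_powersetCard.1 hT).2)

theorem two_pow_mul_card_filter_exists_forall_pos_le [FiniteDimensional K V]
    (B : E →ₗ[K] V →ₗ[K] K) {H : Finset E} (hH : Disjoint H (-H)) (m : ℕ) :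
    2 ^ m * (((H ∪ -H).powersetCard (m + 1)).filter fun Y => ∃ v, ∀ y ∈ Y, 0 < B y v).card ≤
      (∑ i ∈ range (Module.finrank K V), m.choose i) * ((H ∪ -H).powersetCard (m + 1)).card := by
  have card_symm : (H ∪ -H).card = 2 * H.card := by
    rw [card_union_of_disjoint hH, card_neg, two_mul]
  rw [card_powersetCard, card_symm]
  calc _ ≤ 2 ^ m * (H.card.choose (m + 1) *
          (2 * ∑ i ∈ range (Module.finrank K V), m.choose i)) :=
        Nat.mul_le_mul_left _ (card_filter_exists_forall_pos_le B hH m)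
    _ = (∑ i ∈ range (Module.finrank K V), m.choose i) *
          (2 ^ (m + 1) * H.card.choose (m + 1)) := by ring
    _ ≤ _ := Nat.mul_le_mul_left _ (pow_mul_choose_le_choose_mul 2 _ _)

end SymmetricSets

theorem exists_forall_mem_eq_zero_forall_pos {E : Type*} [AddCommGroup E] [Module ℝ E]
    [TopologicalSpace E] [IsTopologicalAddGroup E] [ContinuousSMul ℝ E] [LocallyConvexSpace ℝ E]
    {L : Submodule ℝ E} {s : Set E} (hL : IsClosed (L : Set E)) (hs : Convex ℝ s)
    (hs_compact : IsCompact s) (hdisj : Disjoint (L : Set E) s) :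
    ∃ f : E →L[ℝ] ℝ, (∀ x ∈ L, f x = 0) ∧ ∀ x ∈ s, 0 < f x := by
  obtain ⟨f, u, v, hfL, huv, hfs⟩ :=
    geometric_hahn_banach_closed_compact L.convex hL hs hs_compact hdisj
  have hu : 0 < u := by simpa using hfL 0 L.zero_mem
  refine ⟨f, fun x hx => ?_, fun x hx => (hu.trans huv).trans (hfs x hx)⟩
  by_contra hfx
  have := hfL ((u / f x) • x) (L.smul_mem _ hx)
  rw [map_smul, smul_eq_mul, div_mul_cancel₀ _ hfx] at this
  exact this.false

theorem mem_pmCube {k : ℕ} {y : Fin k → ℝ} : y ∈ pmCube k ↔ ∀ i, y i = 1 ∨ y i = -1 := by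
  rw [pmCube, mem_image]
  constructor
  · rintro ⟨f, -, rfl⟩ i
    cases h : f i <;> simp [h]
  · intro h
    refine ⟨fun i => decide (y i = 1), mem_univ _, funext fun i => ?_⟩
    rcases h i with h | h <;> norm_num [h]

theorem neg_mem_pmCubeStar {k : ℕ} {y : Fin k → ℝ} (hy : y ∈ pmCubeStar k) :
    -y ∈ pmCubeStar k := by
  simpa [pmCubeStar, mem_pmCube, neg_eq_iff_eq_neg, or_comm, and_comm] using hy

/-- The vertices in `C^{r+1}_*` with last coordinate `+1`, one from each antipodal pair. -/
def pmCubeStarPlus (r : ℕ) : Finset (Fin (r + 1) → ℝ) :=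
  (pmCubeStar (r + 1)).filter fun y => y (Fin.last r) = 1

theorem disjoint_pmCubeStarPlus_neg (r : ℕ) :
    Disjoint (pmCubeStarPlus r) (-pmCubeStarPlus r) := by
  refine disjoint_left.2 fun y hy hny => ?_
  have h1 : y (Fin.last r) = 1 := (mem_filter.1 hy).2
  have h2 : -y (Fin.last r) = 1 := (mem_filter.1 (mem_neg'.1 hny)).2
  linarith

theorem pmCubeStarPlus_union_neg (r : ℕ) :
    pmCubeStarPlus r ∪ -pmCubeStarPlus r = pmCubeStar (r + 1) := by
  ext y
  simp only [pmCubeStarPlus, mem_union, mem_neg', mem_filter, Pi.neg_apply]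
  refine ⟨fun h => h.elim And.left fun h => neg_neg y ▸ neg_mem_pmCubeStar h.1, fun hy => ?_⟩
  have hlast := mem_pmCube.1 (Finset.mem_sdiff.1 hy).1 (Fin.last r)
  exact hlast.imp (fun h => ⟨hy, h⟩) fun h => ⟨neg_mem_pmCubeStar hy, by simp [h]⟩

theorem convexHull_subset_Icc_of_subset_pmCube {k : ℕ} {Y : Finset (Fin k → ℝ)}
    (hY : Y ⊆ pmCube k) : convexHull ℝ (Y : Set (Fin k → ℝ)) ⊆ Set.Icc (-1) 1 := by
  refine convexHull_min (fun y hy => ?_) (convex_Icc _ _)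
  have hy := mem_pmCube.1 (hY hy)
  refine ⟨fun i => ?_, fun i => ?_⟩ <;> rcases hy i with h | h <;> norm_num [h]

theorem smul_allOne_mem_segment {k : ℕ} {c : ℝ} (hc : c ∈ Set.Icc (-1) 1) :
    c • allOne k ∈ segment ℝ (-(allOne k)) (allOne k) := by
  refine ⟨(1 - c) / 2, (1 + c) / 2, by linarith [hc.2], by linarith [hc.1], by ring, ?_⟩
  module

/-- The event in the definition of `tau`: `conv Y` does not meet the diagonal `conv{-𝟙,𝟙}`. -/
def MissesDiagonal {k : ℕ} (Y : Finset (Fin k → ℝ)) : Prop :=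
  convexHull ℝ (Y : Set (Fin k → ℝ)) ∩ segment ℝ (-(allOne k)) (allOne k) = ∅

theorem MissesDiagonal.disjoint_span_convexHull {r : ℕ} {Y : Finset (Fin (r + 1) → ℝ)}
    (h : MissesDiagonal Y) (hY : Y ⊆ pmCube (r + 1)) :
    Disjoint (ℝ ∙ allOne (r + 1) : Set (Fin (r + 1) → ℝ)) (convexHull ℝ ↑Y) := by
  refine Set.disjoint_left.2 fun x hx hxY => ?_
  obtain ⟨c, rfl⟩ := Submodule.mem_span_singleton.1 hx
  have hbox := convexHull_subset_Icc_of_subset_pmCube hY hxY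
  have hc : c ∈ Set.Icc (-1) 1 := by
    simpa [allOne] using And.intro (hbox.1 0) (hbox.2 0)
  exact Set.eq_empty_iff_forall_notMem.1 h _ ⟨hxY, smul_allOne_mem_segment hc⟩

theorem finrank_dualAnnihilator_span_allOne (r : ℕ) :
    Module.finrank ℝ (ℝ ∙ allOne (r + 1)).dualAnnihilator = r := by
  have hne : allOne (r + 1) ≠ 0 := fun h => one_ne_zero (congrFun h 0)
  have := Subspace.finrank_add_finrank_dualAnnihilator_eq (ℝ ∙ allOne (r + 1))
  rw [finrank_span_singleton hne, Module.finrank_fin_fun] at this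
  omega

theorem MissesDiagonal.exists_dualAnnihilator_forall_pos {r : ℕ}
    {Y : Finset (Fin (r + 1) → ℝ)} (h : MissesDiagonal Y) (hY : Y ⊆ pmCube (r + 1)) :
    ∃ f : (ℝ ∙ allOne (r + 1)).dualAnnihilator, ∀ y ∈ Y, 0 < f.1 y := by
  obtain ⟨f, hf, hpos⟩ := exists_forall_mem_eq_zero_forall_pos
    (Submodule.closed_of_finiteDimensional _) (convex_convexHull ℝ _)
    (Y.finite_toSet.isCompact_convexHull ℝ) (h.disjoint_span_convexHull hY)
  exact ⟨⟨f, (Submodule.mem_dualAnnihilator _).2 hf⟩,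
    fun y hy => hpos y (subset_convexHull ℝ _ hy)⟩

-- In `tau`, the coercion makes the filtered variable range over sets rather than finsets.
theorem tau_eq_div (k m : ℕ) : tau k m =
    (((pmCubeStar k).powersetCard m).filter MissesDiagonal).card /
      ((pmCubeStar k).powersetCard m).card := by
  rw [tau, bind_pure_comp, fmap_def, filter_image]
  congr 2
  exact card_image_of_injective _ coe_injective

theorem tau_le_one (k m : ℕ) : tau k m ≤ 1 := by
  rw [tau_eq_div]
  exact div_le_one_of_le₀ (Nat.cast_le.2 (card_filter_le _ _)) (Nat.cast_nonneg _)

theorem bFn_zero_right (p : ℕ) : bFn p 0 = 1 := by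
  simp [bFn, sum_range_succ']

theorem two_pow_mul_card_filter_missesDiagonal_le (r m : ℕ) :
    2 ^ m * (((pmCubeStar (r + 1)).powersetCard (m + 1)).filter MissesDiagonal).card ≤
      (∑ i ∈ range r, m.choose i) * ((pmCubeStar (r + 1)).powersetCard (m + 1)).card := by
  let W := (ℝ ∙ allOne (r + 1)).dualAnnihilator
  have bound := two_pow_mul_card_filter_exists_forall_pos_le (K := ℝ) (V := W) W.subtype.flip
    (disjoint_pmCubeStarPlus_neg r) m
  rw [finrank_dualAnnihilator_span_allOne, pmCubeStarPlus_union_neg] at bound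
  refine (Nat.mul_le_mul_left _ (card_le_card fun Y hY => ?_)).trans bound
  obtain ⟨hY, hmiss⟩ := mem_filter.1 hY
  have hYcube : Y ⊆ pmCube (r + 1) := (mem_powersetCard.1 hY).1.trans sdiff_subset
  exact mem_filter.2 ⟨hY, hmiss.exists_dualAnnihilator_forall_pos hYcube⟩

theorem statement13 (k m : ℕ) (hm : m ≤ 2 ^ k - 2) :
    tau k m ≤ (bFn (k - 2) (m - 1) : ℝ) / 2 ^ (m - 1) := by
  rcases m with - | m
  · simpa [bFn_zero_right] using tau_le_one k 0
  have hk : 2 ≤ k := by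
    by_contra! hk
    interval_cases k <;> simp at hm
  obtain ⟨r, rfl⟩ := Nat.exists_eq_add_of_le' hk
  rw [tau_eq_div]
  refine div_le_of_le_mul₀ (Nat.cast_nonneg _) (by positivity) ?_
  rw [div_mul_eq_mul_div, le_div_iff₀' (by positivity)]
  exact_mod_cast two_pow_mul_card_filter_missesDiagonal_le (r + 1) m

end
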